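/- arXiv:2002.03904 — 2 statements merged into one kernel-verified Lean document; each statement's English description precedes it below -/
import Mathlib

section
/- Let X and Y be smooth complex normed spaces with dim X ≥ 2, equipped with their unique compatible semi-inner products, and let f : X → Y be a surjective mapping such that |[f(x), f(y)]| = |[x, y]| for all x, y ∈ X. Then there exist a surjective isometry U : X → Y that is either linear or conjugate-linear, and a function σ : X → ℂ with |σ(x)| = 1 for all x, such that f(x) = σ(x) U x for all x ∈ X. -/
open RCLike

/-- A support functional at `x`: a norm-one continuous linear functional with `φ x = ‖x‖`. -/
def SuppFunc (𝕜 : Type*) [RCLike 𝕜] {X : Type*} [NormedAddCommGroup X] [NormedSpace 𝕜 X]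
    (x : X) (φ : X →L[𝕜] 𝕜) : Prop :=
  ‖φ‖ = 1 ∧ φ x = (‖x‖ : 𝕜)

/-- `X` is smooth at `x` if there is a unique support functional at `x`. -/
def NormSmoothAt (𝕜 : Type*) [RCLike 𝕜] {X : Type*} [NormedAddCommGroup X] [NormedSpace 𝕜 X]
    (x : X) : Prop := ∃! φ : X →L[𝕜] 𝕜, SuppFunc 𝕜 x φ

/-- `X` is smooth if it is smooth at every nonzero point. -/
def NormSmooth (𝕜 : Type*) (X : Type*) [RCLike 𝕜] [NormedAddCommGroup X] [NormedSpace 𝕜 X] :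
    Prop := ∀ x : X, x ≠ 0 → NormSmoothAt 𝕜 x

/-- `sip` is the canonical semi-inner product `[u,v] = ‖v‖ * φ_v u` built from support
functionals (on a smooth space this pins `sip` down uniquely). -/
def IsCompatSIP (𝕜 : Type*) {X : Type*} [RCLike 𝕜] [NormedAddCommGroup X] [NormedSpace 𝕜 X]
    (sip : X → X → 𝕜) : Prop :=
  (∀ u : X, sip u 0 = 0) ∧
  ∀ (u v : X) (φ : X →L[𝕜] 𝕜), SuppFunc 𝕜 v φ → sip u v = (‖v‖ : 𝕜) * φ u

/-- Birkhoff–James orthogonality: `x ⊥ y` iff `‖x + a • y‖ ≥ ‖x‖` for all scalars. -/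
def BJOrth (𝕜 : Type*) {X : Type*} [RCLike 𝕜] [NormedAddCommGroup X] [NormedSpace 𝕜 X]
    (x y : X) : Prop := ∀ a : 𝕜, ‖x‖ ≤ ‖x + a • y‖

/-- A semi-inner product compatible with the norm: additive and homogeneous in the first
variable, conjugate-homogeneous in the second, positive definite, Cauchy–Schwarz, and
`[x,x] = ‖x‖²`. -/
def IsSIP (𝕜 : Type*) {X : Type*} [RCLike 𝕜] [NormedAddCommGroup X] [NormedSpace 𝕜 X]
    (sip : X → X → 𝕜) : Prop :=
  (∀ x y z : X, sip (x + y) z = sip x z + sip y z) ∧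
  (∀ (a : 𝕜) (x y : X), sip (a • x) y = a * sip x y) ∧
  (∀ (a : 𝕜) (x y : X), sip x (a • y) = (starRingEnd 𝕜) a * sip x y) ∧
  (∀ x : X, x ≠ 0 → 0 < re (sip x x) ∧ im (sip x x) = 0) ∧
  (∀ x y : X, ‖sip x y‖ ≤ Real.sqrt (re (sip x x)) * Real.sqrt (re (sip y y))) ∧
  (∀ x : X, sip x x = (‖x‖ : 𝕜) ^ 2)

/-!
Compatible semi-inner products turn the points `w` of `X` into linear functionals `P w = [·, w]`,
and the points of `Y` into `Q w = [·, f w]`, with `‖Q w (f x)‖ = ‖P w x‖`. Both families are dense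
in the algebraic dual for the finite topology: a functional on a finite-dimensional subspace attains
its norm there, and a Hahn–Banach extension of it is a multiple of a support functional at a point
where the norm is attained. Everything after that is linear algebra.

Density of `Q` gives `f (x + l • y) ∈ span {f x, f y}`, so for every unit scalar `l` there is a unit
scalar `k` with `‖Q w (f x) + k * Q w (f y)‖ = ‖P w x + l * P w y‖` for all `w`. Comparing the cases
`l = 1` and `l = I` shows that, after multiplying `f y` by a unit scalar, the ratio
`Q w (f y) / Q w (f x)` is the image of `P w y / P w x` under the identity or the conjugation.
Fixing `x`, that automorphism does not depend on `y`, and the rescaled map is then semilinear.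
-/

namespace PhaseEquivalence

open Module Submodule

section Scalars

theorem ringHom_eq_of_forall_map_mul_add_eq {K L : Type*} [DivisionRing K] [CommRing L] [IsDomain L]
    {τ υ : K →+* L} {c k : K} {A B : L} (hc : c ≠ 0)
    (h : ∀ e, υ (c * e + k) = A * τ e + B) : τ = υ := by
  have hB : υ k = B := by simpa using h 0
  have hA : υ c = A := by simpa [hB] using h 1
  ext e
  have he : υ c * υ e = υ c * τ e := by simpa [hA, hB] using h e
  exact (mul_left_cancel₀ ((map_ne_zero υ).2 hc) he).symm

theorem exists_norm_eq_one_mul_eq {𝕜 : Type*} [NormedField 𝕜] {a b : 𝕜} (h : ‖a‖ = ‖b‖) :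
    ∃ s : 𝕜, ‖s‖ = 1 ∧ s * a = b := by
  rcases eq_or_ne a 0 with rfl | ha
  · exact ⟨1, norm_one, by simpa [eq_comm] using h⟩
  · exact ⟨b / a, by rw [norm_div, ← h, div_self (norm_ne_zero_iff.2 ha)], div_mul_cancel₀ b ha⟩

variable {𝕜 : Type*} [RCLike 𝕜]

theorem re_eq_of_norm_eq_of_norm_one_add_eq {k l : 𝕜} (h : ‖k‖ = ‖l‖)
    (h1 : ‖1 + k‖ = ‖1 + l‖) : re k = re l := by
  have hsq : normSq k = normSq l := by rw [normSq_eq_def', normSq_eq_def', h]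
  have hsq1 : normSq (1 + k) = normSq (1 + l) := by rw [normSq_eq_def', normSq_eq_def', h1]
  simpa [normSq_add, hsq] using hsq1

theorem eq_one_of_norm_eq_one_of_re_eq_one {k : 𝕜} (h : ‖k‖ = 1) (hre : re k = 1) : k = 1 :=
  (norm_le_re_iff_eq_norm.1 (by rw [h, hre])).trans (by rw [h, ofReal_one])

theorem im_eq_one_or_neg_one_of_norm_eq_one_of_re_eq_zero {k : 𝕜} (h : ‖k‖ = 1) (hre : re k = 0) :
    im k = 1 ∨ im k = -1 := by
  have hsq := norm_sq_eq_def (z := k)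
  rw [h, hre] at hsq
  exact mul_self_eq_one_iff.1 (by linarith)

/-- `τ` is the identity or the conjugation of `𝕜`. These are the ring automorphisms along which
norm-preserving maps turn out to be semilinear; for `𝕜 = ℝ` the two coincide. -/
def IsIdOrConj (τ : 𝕜 →+* 𝕜) : Prop := τ = RingHom.id 𝕜 ∨ τ = starRingEnd 𝕜

theorem IsIdOrConj.norm_map {τ : 𝕜 →+* 𝕜} (h : IsIdOrConj τ) (a : 𝕜) : ‖τ a‖ = ‖a‖ := by
  rcases h with rfl | rfl <;> simp

theorem IsIdOrConj.map_map {τ : 𝕜 →+* 𝕜} (h : IsIdOrConj τ) (a : 𝕜) : τ (τ a) = a := by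
  rcases h with rfl | rfl <;> simp

theorem exists_isIdOrConj_eq_of_re_eq {α : Type*} {g h : α → 𝕜} (hre : ∀ i, re (h i) = re (g i))
    {c : 𝕜} (hc : ‖c‖ = 1) (hc0 : re c = 0) (hI : ∀ i, re (c * h i) = re (I * g i)) :
    ∃ τ : 𝕜 →+* 𝕜, IsIdOrConj τ ∧ ∀ i, h i = τ (g i) := by
  have him : ∀ i, im c * im (h i) = im (g i) := fun i => by
    simpa [mul_re, hc0, I_mul_re] using hI i
  rcases im_eq_one_or_neg_one_of_norm_eq_one_of_re_eq_zero hc hc0 with hc1 | hc1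
  · exact ⟨RingHom.id 𝕜, Or.inl rfl, fun i => RCLike.ext (hre i) (by simpa [hc1] using him i)⟩
  · refine ⟨starRingEnd 𝕜, Or.inr rfl, fun i => RCLike.ext (by simp [hre]) ?_⟩
    simp [← him, hc1]

theorem exists_isIdOrConj_mul_eq {α : Type*} {g h : α → 𝕜} {i₀ : α} (hi₀ : g i₀ = 1)
    (hnorm : ∀ i, ‖h i‖ = ‖g i‖)
    (hre : ∀ l : 𝕜, ‖l‖ = 1 → ∃ k : 𝕜, ‖k‖ = 1 ∧ ∀ i, re (k * h i) = re (l * g i)) :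
    ∃ τ : 𝕜 →+* 𝕜, IsIdOrConj τ ∧ ∃ s : 𝕜, ‖s‖ = 1 ∧ ∀ i, s * h i = τ (g i) := by
  obtain ⟨s, hs, hs_re⟩ := hre 1 norm_one
  simp only [one_mul] at hs_re
  by_cases hI : (I : 𝕜) = 0
  · exact ⟨RingHom.id 𝕜, Or.inl rfl, s, hs, fun i =>
      RCLike.ext (hs_re i) (by simp only [im_eq_zero hI])⟩
  obtain ⟨k, hk, hk_re⟩ := hre I (norm_I_of_ne_zero hI)
  have hs0 : s ≠ 0 := norm_ne_zero_iff.1 (by simp [hs])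
  have hks : ∀ i, re (k / s * (s * h i)) = re (I * g i) := fun i => by
    rw [← mul_assoc, div_mul_cancel₀ _ hs0, hk_re]
  have hone : s * h i₀ = 1 :=
    eq_one_of_norm_eq_one_of_re_eq_one (by simp [hs, hnorm, hi₀]) (by simp [hs_re, hi₀])
  have hks0 : re (k / s) = 0 := by simpa [hone, hi₀] using hks i₀
  obtain ⟨τ, hτ, h_eq⟩ := exists_isIdOrConj_eq_of_re_eq hs_re (by simp [hk, hs]) hks0 hks
  exact ⟨τ, hτ, s, hs, h_eq⟩

end Scalars

section FinitelyDense

variable {ι K E : Type*} [Field K] [AddCommGroup E] [Module K E] {P : ι → Dual K E}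

/-- The family `P` is dense in the algebraic dual of `E` for the finite topology (the one of the
Jacobson density theorem): every functional agrees on every finite set with some member of `P`. -/
def FinitelyDense (P : ι → Dual K E) : Prop :=
  ∀ (φ : Dual K E) (s : Set E), s.Finite → ∃ w, ∀ v ∈ s, P w v = φ v

theorem FinitelyDense.comp_surjective {κ : Type*} (hP : FinitelyDense P) {g : κ → ι}
    (hg : Function.Surjective g) : FinitelyDense (P ∘ g) := fun φ s hs => by
  obtain ⟨w, hw⟩ := hP φ s hs
  obtain ⟨k, rfl⟩ := hg w
  exact ⟨k, hw⟩

theorem FinitelyDense.exists_forall_apply_eq (hP : FinitelyDense P) {κ : Type*} [Finite κ]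
    {v : κ → E} (hv : LinearIndependent K v) (a : κ → K) : ∃ w, ∀ i, P w (v i) = a i := by
  obtain ⟨φ, hφ⟩ := ((Finsupp.linearCombination K a).comp hv.repr).exists_extend
  obtain ⟨w, hw⟩ := hP φ _ (Set.finite_range v)
  refine ⟨w, fun i => ?_⟩
  have hφi := LinearMap.congr_fun hφ ⟨v i, subset_span (Set.mem_range_self i)⟩
  rw [hw _ (Set.mem_range_self i)]
  simpa [hv.repr_eq_single i] using hφi

theorem FinitelyDense.exists_apply_eq (hP : FinitelyDense P) {x : E} (hx : x ≠ 0) (a : K) :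
    ∃ w, P w x = a := by
  obtain ⟨w, hw⟩ := hP.exists_forall_apply_eq
    (LinearIndependent.of_subsingleton (v := ![x]) 0 hx) ![a]
  exact ⟨w, hw 0⟩

theorem FinitelyDense.exists_apply_eq_pair (hP : FinitelyDense P) {x y : E}
    (h : LinearIndependent K ![x, y]) (a b : K) : ∃ w, P w x = a ∧ P w y = b := by
  obtain ⟨w, hw⟩ := hP.exists_forall_apply_eq h ![a, b]
  exact ⟨w, hw 0, hw 1⟩

theorem FinitelyDense.exists_apply_eq_triple (hP : FinitelyDense P) {x y z : E}
    (h : LinearIndependent K ![x, y, z]) (a b c : K) :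
    ∃ w, P w x = a ∧ P w y = b ∧ P w z = c := by
  obtain ⟨w, hw⟩ := hP.exists_forall_apply_eq h ![a, b, c]
  exact ⟨w, hw 0, hw 1, hw 2⟩

theorem FinitelyDense.exists_apply_ne_zero_pair [Infinite K] (hP : FinitelyDense P) {x y : E}
    (hx : x ≠ 0) (hy : y ≠ 0) : ∃ w, P w x ≠ 0 ∧ P w y ≠ 0 := by
  obtain ⟨φ, hφ⟩ := exists_dual_forall_apply_ne_zero (K := K) ![x, y] (by simp [hx, hy])
  obtain ⟨w, hw⟩ := hP φ {x, y} (Set.toFinite _)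
  exact ⟨w, by simpa [hw x (by simp)] using hφ 0, by simpa [hw y (by simp)] using hφ 1⟩

theorem FinitelyDense.mem_span (hP : FinitelyDense P) {s : Set E} (hs : s.Finite) {u : E}
    (h : ∀ w, (∀ v ∈ s, P w v = 0) → P w u = 0) : u ∈ span K s := by
  by_contra hu
  obtain ⟨φ, hφu, hφs⟩ := exists_le_ker_of_notMem hu
  obtain ⟨w, hw⟩ := hP φ (insert u s) (hs.insert u)
  refine hφu ?_
  rw [← hw u (Set.mem_insert u s)]
  exact h w fun v hv => (hw v (Set.mem_insert_of_mem u hv)).trans (hφs (subset_span hv))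

end FinitelyDense

section RatioIntertwined

variable {ι K L E F : Type*} [Field K] [Field L] [AddCommGroup E] [Module K E] [AddCommGroup F]
  [Module L F] {P : ι → Dual K E} {Q : ι → Dual L F} {x y z : E} {x' u v : F} {τ : K →+* L}

/-- The image of `P w y / P w x` under `τ` is `Q w u / Q w x'`, for all `w` with `P w x ≠ 0`. This
expresses that `u` is the correctly rescaled image of `y` when `x'` is the image of `x`; the second
ratio is cleared of its denominator. -/
def RatioIntertwined (P : ι → Dual K E) (Q : ι → Dual L F) (x : E) (x' : F) (τ : K →+* L) (y : E)
    (u : F) : Prop :=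
  ∀ w, P w x ≠ 0 → Q w u = τ (P w y / P w x) * Q w x'

theorem RatioIntertwined.add (hu : RatioIntertwined P Q x x' τ y u)
    (hv : RatioIntertwined P Q x x' τ z v) : RatioIntertwined P Q x x' τ (y + z) (u + v) :=
  fun w hw => by rw [map_add, map_add, hu w hw, hv w hw, add_div, map_add, add_mul]

theorem RatioIntertwined.smul (hu : RatioIntertwined P Q x x' τ y u) (a : K) :
    RatioIntertwined P Q x x' τ (a • y) (τ a • u) := fun w hw => by
  rw [map_smul, map_smul, hu w hw, smul_eq_mul, smul_eq_mul, mul_div_assoc, map_mul, mul_assoc]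

theorem RatioIntertwined.unique [Infinite L] (hQ : FinitelyDense Q)
    (hx : ∀ w, P w x = 0 → Q w x' = 0) (hx' : x' ≠ 0) (hu : RatioIntertwined P Q x x' τ y u)
    (hv : RatioIntertwined P Q x x' τ y v) : u = v := by
  by_contra huv
  obtain ⟨w, hwx', hwuv⟩ := hQ.exists_apply_ne_zero_pair hx' (sub_ne_zero.2 huv)
  have hwx : P w x ≠ 0 := fun h => hwx' (hx w h)
  exact hwuv (by rw [map_sub, hu w hwx, hv w hwx, sub_self])

end RatioIntertwined

section NormPreserving

variable {ι 𝕜 E F : Type*} [RCLike 𝕜] [AddCommGroup E] [Module 𝕜 E] [AddCommGroup F] [Module 𝕜 F]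
  {P : ι → Dual 𝕜 E} {Q : ι → Dual 𝕜 F} {f : E → F} {x y z : E}

theorem apply_map_eq_zero_iff (hf : ∀ w x, ‖Q w (f x)‖ = ‖P w x‖) (w : ι) (x : E) :
    Q w (f x) = 0 ↔ P w x = 0 := by
  rw [← norm_eq_zero, hf, norm_eq_zero]

theorem map_ne_zero_of_ne_zero (hP : FinitelyDense P) (hf : ∀ w x, ‖Q w (f x)‖ = ‖P w x‖)
    (hx : x ≠ 0) : f x ≠ 0 := by
  obtain ⟨w, hw⟩ := hP.exists_apply_eq hx 1
  intro hfx
  simpa [hfx, hw] using hf w x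

theorem exists_map_smul_add_smul_eq (hQ : FinitelyDense Q) (hf : ∀ w x, ‖Q w (f x)‖ = ‖P w x‖)
    (c d : 𝕜) (x y : E) : ∃ a b : 𝕜, f (c • x + d • y) = a • f x + b • f y := by
  have hmem : f (c • x + d • y) ∈ span 𝕜 {f x, f y} :=
    hQ.mem_span (Set.toFinite _) fun w hw => by
      have hx := (apply_map_eq_zero_iff hf w x).1 (hw _ (by simp))
      have hy := (apply_map_eq_zero_iff hf w y).1 (hw _ (by simp))
      simp [apply_map_eq_zero_iff hf, hx, hy]
  obtain ⟨a, b, hab⟩ := mem_span_pair.1 hmem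
  exact ⟨a, b, hab.symm⟩

theorem exists_map_smul_eq (hP : FinitelyDense P) (hQ : FinitelyDense Q)
    (hf : ∀ w x, ‖Q w (f x)‖ = ‖P w x‖) (hx : x ≠ 0) (d : 𝕜) :
    ∃ c : 𝕜, ‖c‖ = ‖d‖ ∧ f (d • x) = c • f x := by
  obtain ⟨a, b, hab⟩ := exists_map_smul_add_smul_eq hQ hf d 0 x x
  rw [zero_smul, add_zero, ← add_smul] at hab
  obtain ⟨w, hw⟩ := hP.exists_apply_eq hx 1
  exact ⟨a + b, by simpa [hab, hf, hw] using hf w (d • x), hab⟩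

theorem exists_norm_add_mul_eq (hP : FinitelyDense P) (hQ : FinitelyDense Q)
    (hf : ∀ w x, ‖Q w (f x)‖ = ‖P w x‖) (hxy : LinearIndependent 𝕜 ![x, y]) {l : 𝕜} (hl : ‖l‖ = 1) :
    ∃ k : 𝕜, ‖k‖ = 1 ∧ ∀ w, ‖Q w (f x) + k * Q w (f y)‖ = ‖P w x + l * P w y‖ := by
  obtain ⟨a, b, hab⟩ := exists_map_smul_add_smul_eq hQ hf 1 l x y
  have key : ∀ w, ‖a * Q w (f x) + b * Q w (f y)‖ = ‖P w x + l * P w y‖ := fun w => by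
    have h := hf w ((1 : 𝕜) • x + l • y)
    rw [hab] at h
    simpa using h
  have ha : ‖a‖ = 1 := by
    obtain ⟨w, hwx, hwy⟩ := hP.exists_apply_eq_pair hxy 1 0
    simpa [hwx, hwy, (apply_map_eq_zero_iff hf w y).2 hwy, hf] using key w
  have hb : ‖b‖ = 1 := by
    obtain ⟨w, hwx, hwy⟩ := hP.exists_apply_eq_pair hxy 0 1
    simpa [hwx, hwy, (apply_map_eq_zero_iff hf w x).2 hwx, hf, hl] using key w
  have ha0 : a ≠ 0 := norm_ne_zero_iff.1 (by simp [ha])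
  refine ⟨b / a, by simp [ha, hb], fun w => ?_⟩
  calc ‖Q w (f x) + b / a * Q w (f y)‖ = ‖a * (Q w (f x) + b / a * Q w (f y))‖ := by
        rw [norm_mul, ha, one_mul]
    _ = ‖a * Q w (f x) + b * Q w (f y)‖ := by congr 1; field_simp
    _ = ‖P w x + l * P w y‖ := key w

theorem exists_re_mul_div_eq (hP : FinitelyDense P) (hQ : FinitelyDense Q)
    (hf : ∀ w x, ‖Q w (f x)‖ = ‖P w x‖) (hxy : LinearIndependent 𝕜 ![x, y]) {l : 𝕜} (hl : ‖l‖ = 1) :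
    ∃ k : 𝕜, ‖k‖ = 1 ∧ ∀ w, P w x ≠ 0 →
      re (k * (Q w (f y) / Q w (f x))) = re (l * (P w y / P w x)) := by
  obtain ⟨k, hk, hkl⟩ := exists_norm_add_mul_eq hP hQ hf hxy hl
  refine ⟨k, hk, fun w hw => re_eq_of_norm_eq_of_norm_one_add_eq (by simp [hk, hl, hf]) ?_⟩
  have hw' : Q w (f x) ≠ 0 := mt (apply_map_eq_zero_iff hf w x).1 hw
  calc ‖1 + k * (Q w (f y) / Q w (f x))‖ = ‖(Q w (f x) + k * Q w (f y)) / Q w (f x)‖ := by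
        congr 1; field_simp
    _ = ‖(P w x + l * P w y) / P w x‖ := by rw [norm_div, norm_div, hkl, hf]
    _ = ‖1 + l * (P w y / P w x)‖ := by congr 1; field_simp

theorem exists_ratioIntertwined_of_linearIndependent (hP : FinitelyDense P) (hQ : FinitelyDense Q)
    (hf : ∀ w x, ‖Q w (f x)‖ = ‖P w x‖) (hxy : LinearIndependent 𝕜 ![x, y]) :
    ∃ τ, IsIdOrConj τ ∧ ∃ s : 𝕜, ‖s‖ = 1 ∧ RatioIntertwined P Q x (f x) τ y (s • f y) := by
  obtain ⟨w₁, hw₁x, hw₁y⟩ := hP.exists_apply_eq_pair hxy 1 1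
  obtain ⟨τ, hτ, s, hs, h⟩ := exists_isIdOrConj_mul_eq (α := {w // P w x ≠ 0})
    (g := fun w => P w y / P w x) (h := fun w => Q w (f y) / Q w (f x))
    (i₀ := ⟨w₁, by simp [hw₁x]⟩) (by simp [hw₁x, hw₁y]) (fun w => by simp [hf]) fun l hl => by
      obtain ⟨k, hk, hkl⟩ := exists_re_mul_div_eq hP hQ hf hxy hl
      exact ⟨k, hk, fun w => hkl w w.2⟩
  refine ⟨τ, hτ, s, hs, fun w hw => ?_⟩
  have hw' : Q w (f x) ≠ 0 := mt (apply_map_eq_zero_iff hf w x).1 hw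
  rw [← h ⟨w, hw⟩, map_smul, smul_eq_mul, mul_assoc, div_mul_cancel₀ _ hw']

theorem exists_ratioIntertwined_smul_self (hP : FinitelyDense P) (hQ : FinitelyDense Q)
    (hf : ∀ w x, ‖Q w (f x)‖ = ‖P w x‖) (hx : x ≠ 0) {τ : 𝕜 →+* 𝕜} (hτ : IsIdOrConj τ) (d : 𝕜) :
    ∃ s : 𝕜, ‖s‖ = 1 ∧ RatioIntertwined P Q x (f x) τ (d • x) (s • f (d • x)) := by
  obtain ⟨c, hc, hfc⟩ := exists_map_smul_eq hP hQ hf hx d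
  obtain ⟨s, hs, hsc⟩ := exists_norm_eq_one_mul_eq (hc.trans (hτ.norm_map d).symm)
  refine ⟨s, hs, fun w hw => ?_⟩
  rw [hfc, smul_smul, hsc, map_smul, map_smul, smul_eq_mul, smul_eq_mul,
    mul_div_cancel_right₀ _ hw]

/- Along functionals with `P w x = 1`, `P w z` constant and `P w y` arbitrary, the ratio at
`c • y + d • z` is an affine function of the one at `y`, both before and after applying `f`. -/
theorem ringHom_eq_of_ratioIntertwined_smul_add_smul (hQ : FinitelyDense Q)
    (hf : ∀ w x, ‖Q w (f x)‖ = ‖P w x‖) {k m : 𝕜}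
    (hw : ∀ e, ∃ w, P w x = 1 ∧ P w y = e ∧ P w z = k ∧ Q w (f z) = m * Q w (f x))
    {τ υ : 𝕜 →+* 𝕜} {c d s t : 𝕜} (hc : c ≠ 0) (hs : s ≠ 0)
    (hy : RatioIntertwined P Q x (f x) τ y (s • f y))
    (hyz : RatioIntertwined P Q x (f x) υ (c • y + d • z) (t • f (c • y + d • z))) : τ = υ := by
  obtain ⟨a, b, hab⟩ := exists_map_smul_add_smul_eq hQ hf c d y z
  refine ringHom_eq_of_forall_map_mul_add_eq (k := d * k) (A := t * a / s) (B := t * b * m) hc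
    fun e => ?_
  obtain ⟨w, hwx, hwy, hwz, hwfz⟩ := hw e
  have hwfx : Q w (f x) ≠ 0 := mt (apply_map_eq_zero_iff hf w x).1 (by simp [hwx])
  have hτ : s * Q w (f y) = τ e * Q w (f x) := by simpa [hwx, hwy] using hy w (by simp [hwx])
  have hυ : t * (a * Q w (f y) + b * (m * Q w (f x))) = υ (c * e + d * k) * Q w (f x) := by
    have h := hyz w (by simp [hwx])
    rw [hab] at h
    simpa only [map_add (P w), map_add (Q w), map_smul, smul_eq_mul, hwx, hwy, hwz, hwfz,
      div_one] using h
  apply mul_right_cancel₀ hwfx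
  rw [← hυ]
  field_simp
  linear_combination (a * t) * hτ

theorem ringHom_eq_of_ratioIntertwined (hP : FinitelyDense P) (hQ : FinitelyDense Q)
    (hf : ∀ w x, ‖Q w (f x)‖ = ‖P w x‖) (hxy : LinearIndependent 𝕜 ![x, y])
    (hxz : LinearIndependent 𝕜 ![x, z]) {τ υ : 𝕜 →+* 𝕜} {s t : 𝕜} (hs : s ≠ 0) (ht : t ≠ 0)
    (hy : RatioIntertwined P Q x (f x) τ y (s • f y))
    (hz : RatioIntertwined P Q x (f x) υ z (t • f z)) : τ = υ := by
  by_cases hzxy : z ∈ span 𝕜 {x, y}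
  · obtain ⟨d, c, rfl⟩ := mem_span_pair.1 hzxy
    have hc : c ≠ 0 := by
      rintro rfl
      exact (LinearIndependent.pair_iff' (hxz.ne_zero 0)).1 hxz d (by simp)
    rw [add_comm] at hz
    refine ringHom_eq_of_ratioIntertwined_smul_add_smul hQ hf (k := 1) (m := 1) (fun e => ?_)
      hc hs hy hz
    obtain ⟨w, hwx, hwy⟩ := hP.exists_apply_eq_pair hxy 1 e
    exact ⟨w, hwx, hwy, hwx, (one_mul _).symm⟩
  · have hzxy' : LinearIndependent 𝕜 ![z, x, y] :=
      hxy.finCons (by simpa [Set.pair_comm y x] using hzxy)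
    have hx : x ≠ 0 := hxy.ne_zero 0
    have hxyz : LinearIndependent 𝕜 ![x, y + z] :=
      (LinearIndependent.pair_iff' hx).2 fun a ha =>
        hzxy (mem_span_pair.2 ⟨a, -1, by rw [ha, neg_one_smul]; abel⟩)
    obtain ⟨ρ, -, r, -, hr⟩ := exists_ratioIntertwined_of_linearIndependent hP hQ hf hxyz
    have hτρ : τ = ρ :=
      ringHom_eq_of_ratioIntertwined_smul_add_smul hQ hf (z := z) (k := 0) (m := 0) (c := 1)
        (d := 1) (t := r) (fun e => by
          obtain ⟨w, hwz, hwx, hwy⟩ := hP.exists_apply_eq_triple hzxy' 0 1 e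
          exact ⟨w, hwx, hwy, hwz, by simp [apply_map_eq_zero_iff hf, hwz]⟩)
        one_ne_zero hs hy (by simpa using hr)
    have hυρ : υ = ρ :=
      ringHom_eq_of_ratioIntertwined_smul_add_smul hQ hf (z := y) (k := 0) (m := 0) (c := 1)
        (d := 1) (t := r) (fun e => by
          obtain ⟨w, hwz, hwx, hwy⟩ := hP.exists_apply_eq_triple hzxy' e 1 0
          exact ⟨w, hwx, hwz, hwy, by simp [apply_map_eq_zero_iff hf, hwy]⟩)
        one_ne_zero ht hz (by simpa [add_comm] using hr)
    exact hτρ.trans hυρ.symm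

theorem exists_forall_ratioIntertwined (hP : FinitelyDense P) (hQ : FinitelyDense Q)
    (hf : ∀ w x, ‖Q w (f x)‖ = ‖P w x‖) (hx : x ≠ 0) :
    ∃ τ, IsIdOrConj τ ∧ ∀ y, ∃ s : 𝕜, ‖s‖ = 1 ∧ RatioIntertwined P Q x (f x) τ y (s • f y) := by
  obtain ⟨τ, hτ, h⟩ : ∃ τ : 𝕜 →+* 𝕜, IsIdOrConj τ ∧ ∀ y, LinearIndependent 𝕜 ![x, y] →
      ∃ s : 𝕜, ‖s‖ = 1 ∧ RatioIntertwined P Q x (f x) τ y (s • f y) := by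
    by_cases hdim : ∃ y₀, LinearIndependent 𝕜 ![x, y₀]
    · obtain ⟨y₀, hy₀⟩ := hdim
      obtain ⟨τ, hτ, s, hs, h₀⟩ := exists_ratioIntertwined_of_linearIndependent hP hQ hf hy₀
      refine ⟨τ, hτ, fun y hy => ?_⟩
      obtain ⟨υ, -, t, ht, h⟩ := exists_ratioIntertwined_of_linearIndependent hP hQ hf hy
      have hτυ : τ = υ := ringHom_eq_of_ratioIntertwined hP hQ hf hy₀ hy
        (norm_ne_zero_iff.1 (by simp [hs])) (norm_ne_zero_iff.1 (by simp [ht])) h₀ h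
      exact ⟨t, ht, hτυ ▸ h⟩
    · exact ⟨RingHom.id 𝕜, Or.inl rfl, fun y hy => absurd ⟨y, hy⟩ hdim⟩
  refine ⟨τ, hτ, fun y => ?_⟩
  by_cases hxy : LinearIndependent 𝕜 ![x, y]
  · exact h y hxy
  · rw [LinearIndependent.pair_iff' hx, not_forall_not] at hxy
    obtain ⟨d, rfl⟩ := hxy
    exact exists_ratioIntertwined_smul_self hP hQ hf hx hτ d

theorem exists_semilinearMap_map_eq_smul (hP : FinitelyDense P) (hQ : FinitelyDense Q)
    (hf : ∀ w x, ‖Q w (f x)‖ = ‖P w x‖) (hsurj : Function.Surjective f) :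
    ∃ τ : 𝕜 →+* 𝕜, IsIdOrConj τ ∧ ∃ U : E →ₛₗ[τ] F, Function.Surjective U ∧
      ∃ σ : E → 𝕜, (∀ y, ‖σ y‖ = 1) ∧ ∀ y, f y = σ y • U y := by
  rcases subsingleton_or_nontrivial E with hE | hE
  · have : Subsingleton F := hsurj.subsingleton
    exact ⟨RingHom.id 𝕜, Or.inl rfl, 0, Function.surjective_to_subsingleton _, 1, by simp,
      fun y => Subsingleton.elim _ _⟩
  obtain ⟨x, hx⟩ := exists_ne (0 : E)
  obtain ⟨τ, hτ, h⟩ := exists_forall_ratioIntertwined hP hQ hf hx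
  choose s hs hU using h
  have hs0 : ∀ y, s y ≠ 0 := fun y => norm_ne_zero_iff.1 (by simp [hs])
  have huniq : ∀ {y : E} {u v : F}, RatioIntertwined P Q x (f x) τ y u →
      RatioIntertwined P Q x (f x) τ y v → u = v :=
    RatioIntertwined.unique hQ (fun w => (apply_map_eq_zero_iff hf w x).2)
      (map_ne_zero_of_ne_zero hP hf hx)
  let U : E →ₛₗ[τ] F :=
    { toFun := fun y => s y • f y
      map_add' := fun y z => huniq (hU (y + z)) ((hU y).add (hU z))
      map_smul' := fun a y => huniq (hU (a • y)) ((hU y).smul a) }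
  refine ⟨τ, hτ, U, fun v => ?_, fun y => (s y)⁻¹, fun y => by simp [hs],
    fun y => (inv_smul_smul₀ (hs0 y) (f y)).symm⟩
  obtain ⟨y, rfl⟩ := hsurj v
  refine ⟨τ (s y)⁻¹ • y, ?_⟩
  rw [map_smulₛₗ, hτ.map_map]
  exact inv_smul_smul₀ (hs0 y) (f y)

end NormPreserving

end PhaseEquivalence

section SemiInnerProduct

open Module PhaseEquivalence

theorem exists_norm_le_one_norm_apply_eq_opNorm {𝕜 V W : Type*} [DenselyNormedField 𝕜]
    [NormedAddCommGroup V] [NormedSpace 𝕜 V] [ProperSpace V] [NormedAddCommGroup W]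
    [NormedSpace 𝕜 W] (φ : V →L[𝕜] W) : ∃ v, ‖v‖ ≤ 1 ∧ ‖φ v‖ = ‖φ‖ := by
  obtain ⟨v, hv, hsup⟩ := (isCompact_closedBall (0 : V) 1).exists_sSup_image_eq
    (Metric.nonempty_closedBall.2 zero_le_one) φ.continuous.norm.continuousOn
  exact ⟨v, by simpa using hv, hsup.symm.trans φ.sSup_unitClosedBall_eq_norm⟩

variable {𝕜 X : Type*} [RCLike 𝕜] [NormedAddCommGroup X] [NormedSpace 𝕜 X] {sip : X → X → 𝕜}

theorem IsCompatSIP.norm_self (h : IsCompatSIP 𝕜 sip) (w : X) : ‖sip w w‖ = ‖w‖ ^ 2 := by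
  rcases eq_or_ne w 0 with rfl | hw
  · simp [h.1]
  · obtain ⟨g, hg⟩ := exists_dual_vector 𝕜 w (norm_ne_zero_iff.2 hw)
    simp [h.2 w w g hg, hg.2, sq]

theorem IsCompatSIP.exists_dual (h : IsCompatSIP 𝕜 sip) (w : X) :
    ∃ φ : Dual 𝕜 X, ∀ u, sip u w = φ u := by
  rcases eq_or_ne w 0 with rfl | hw
  · exact ⟨0, h.1⟩
  · obtain ⟨g, hg⟩ := exists_dual_vector 𝕜 w (norm_ne_zero_iff.2 hw)
    exact ⟨(‖w‖ : 𝕜) • (g : Dual 𝕜 X), fun u => h.2 u w g hg⟩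

theorem IsCompatSIP.apply_conj_smul_eq (h : IsCompatSIP 𝕜 sip) {g : X →L[𝕜] 𝕜} {e : X}
    (he : ‖e‖ ≤ 1) (hge : ‖g e‖ = ‖g‖) (u : X) : sip u (starRingEnd 𝕜 (g e) • e) = g u := by
  rcases eq_or_ne g 0 with rfl | hg
  · simp [h.1]
  have hg0 : ‖g‖ ≠ 0 := norm_ne_zero_iff.2 hg
  have he1 : ‖e‖ = 1 := by
    have hle : ‖g‖ ≤ ‖g‖ * ‖e‖ := hge ▸ g.le_opNorm e
    exact he.antisymm (le_of_mul_le_mul_left (by simpa using hle) (norm_pos_iff.2 hg))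
  have hnorm : ‖starRingEnd 𝕜 (g e) • e‖ = ‖g‖ := by rw [norm_smul, norm_conj, hge, he1, mul_one]
  have hsupp : SuppFunc 𝕜 (starRingEnd 𝕜 (g e) • e) ((‖g‖ : 𝕜)⁻¹ • g) := by
    constructor
    · simp [norm_smul, hg0]
    · rw [hnorm, smul_apply, map_smul, smul_eq_mul, smul_eq_mul, RCLike.conj_mul, hge, sq,
        inv_mul_cancel_left₀ (ofReal_ne_zero.2 hg0)]
  rw [h.2 u _ _ hsupp, hnorm, smul_apply, smul_eq_mul,
    mul_inv_cancel_left₀ (ofReal_ne_zero.2 hg0)]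

theorem IsCompatSIP.exists_eq_on_finite (h : IsCompatSIP 𝕜 sip) (φ : Dual 𝕜 X) {s : Set X}
    (hs : s.Finite) : ∃ w, ∀ v ∈ s, sip v w = φ v := by
  have : FiniteDimensional 𝕜 (Submodule.span 𝕜 s) := .span_of_finite 𝕜 hs
  have : ProperSpace (Submodule.span 𝕜 s) := FiniteDimensional.proper 𝕜 _
  let ψ : Submodule.span 𝕜 s →L[𝕜] 𝕜 := (φ.domRestrict (Submodule.span 𝕜 s)).toContinuousLinearMap
  obtain ⟨e, he, hψe⟩ := exists_norm_le_one_norm_apply_eq_opNorm ψ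
  obtain ⟨g, hgψ, hg⟩ := exists_extension_norm_eq _ ψ
  refine ⟨starRingEnd 𝕜 (g e) • (e : X), fun v hv => ?_⟩
  rw [h.apply_conj_smul_eq (e := (e : X)) he (by rw [hgψ, hψe, hg])]
  exact hgψ ⟨v, Submodule.subset_span hv⟩

theorem IsCompatSIP.exists_finitelyDense (h : IsCompatSIP 𝕜 sip) :
    ∃ P : X → Dual 𝕜 X, FinitelyDense P ∧ ∀ u w, sip u w = P w u := by
  choose P hP using h.exists_dual
  exact ⟨P, fun φ s hs => by simpa only [hP] using h.exists_eq_on_finite φ hs, fun u w => hP w u⟩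

end SemiInnerProduct

theorem stmt12_general {𝕜 X Y : Type*} [RCLike 𝕜] [NormedAddCommGroup X] [NormedSpace 𝕜 X]
    [NormedAddCommGroup Y] [NormedSpace 𝕜 Y]
    (sipX : X → X → 𝕜) (hX : IsCompatSIP 𝕜 sipX)
    (sipY : Y → Y → 𝕜) (hY : IsCompatSIP 𝕜 sipY)
    (f : X → Y) (hsurj : Function.Surjective f)
    (hf : ∀ x y : X, ‖sipY (f x) (f y)‖ = ‖sipX x y‖) :
    ∃ U : X → Y, Function.Surjective U ∧ (∀ x : X, ‖U x‖ = ‖x‖) ∧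
      (∀ x y : X, U (x + y) = U x + U y) ∧
      ((∀ (a : 𝕜) (x : X), U (a • x) = a • U x) ∨
       (∀ (a : 𝕜) (x : X), U (a • x) = (starRingEnd 𝕜) a • U x)) ∧
      ∃ σ : X → 𝕜, (∀ x : X, ‖σ x‖ = 1) ∧ ∀ x : X, f x = σ x • U x := by
  obtain ⟨P, hP, hsipX⟩ := hX.exists_finitelyDense
  obtain ⟨Q, hQ, hsipY⟩ := hY.exists_finitelyDense
  obtain ⟨τ, hτ, U, hU, σ, hσ, hfU⟩ := PhaseEquivalence.exists_semilinearMap_map_eq_smul hP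
    (hQ.comp_surjective hsurj) (fun w x => by simp [← hsipX, ← hsipY, hf]) hsurj
  have hnorm : ∀ x, ‖f x‖ = ‖x‖ := fun x => by
    have hsq : ‖f x‖ ^ 2 = ‖x‖ ^ 2 := by rw [← hX.norm_self, ← hY.norm_self, hf]
    exact (sq_eq_sq₀ (norm_nonneg _) (norm_nonneg _)).1 hsq
  have hUnorm : ∀ x, ‖U x‖ = ‖x‖ := fun x => by rw [← hnorm x, hfU x, norm_smul, hσ, one_mul]
  refine ⟨U, hU, hUnorm, map_add U, ?_, σ, hσ, hfU⟩
  rcases hτ with rfl | rfl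
  · exact Or.inl (map_smulₛₗ U)
  · exact Or.inr (map_smulₛₗ U)

theorem stmt12 {X Y : Type*} [NormedAddCommGroup X] [NormedSpace ℂ X]
    [NormedAddCommGroup Y] [NormedSpace ℂ Y]
    (hdim : 2 ≤ Module.rank ℂ X)
    (hsmX : NormSmooth ℂ X) (hsmY : NormSmooth ℂ Y)
    (sipX : X → X → ℂ) (hX : IsCompatSIP ℂ sipX)
    (sipY : Y → Y → ℂ) (hY : IsCompatSIP ℂ sipY)
    (f : X → Y) (hsurj : Function.Surjective f)
    (hf : ∀ x y : X, ‖sipY (f x) (f y)‖ = ‖sipX x y‖) :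
    ∃ U : X → Y, Function.Surjective U ∧ (∀ x : X, ‖U x‖ = ‖x‖) ∧
      (∀ x y : X, U (x + y) = U x + U y) ∧
      ((∀ (a : ℂ) (x : X), U (a • x) = a • U x) ∨
       (∀ (a : ℂ) (x : X), U (a • x) = (starRingEnd ℂ) a • U x)) ∧
      ∃ σ : X → ℂ, (∀ x : X, ‖σ x‖ = 1) ∧ ∀ x : X, f x = σ x • U x :=
  stmt12_general sipX hX sipY hY f hsurj hf
end

section
/- Let X and Y be real smooth normed spaces with Y strictly convex, with their unique compatible semi-inner products, and let f : X → Y be a surjective mapping. Then the following are equivalent: (i) |[f(x), f(y)]| = |[x, y]| for all x, y ∈ X; (ii) f is phase equivalent to a surjective linear isometry; (iii) {‖f(x)+f(y)‖, ‖f(x)-f(y)‖} = {‖x+y‖, ‖x-y‖} as sets for all x, y ∈ X. -/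
open RCLike

/-!
If `f` preserves the absolute values of the semi-inner products, then every linear functional `g`
on a finite-dimensional piece of `Y` is attained, hence of the form `[·, f w]`, and `|g ∘ f|` agrees
with the absolute value of a linear functional. So `g (f (x ± y))` is `g (f x) ± g (f y)` up to
signs depending on `g`. Since a real vector space is not a finite union of proper subspaces, the
signs can be chosen independently of `g`, and `f (x ± y)` is `f x ± ε f y` up to signs. For a fixed
`g` with `g (f x₀) = 1`, the map `Q x = g (f x) f x` no longer sees the sign of `f x` and satisfies
the parallelogram law; its polar form at `x₀` is additive, and `± f` is recovered from it.

If `f` is a phase isometry, then `|[f (s y), f y]| = s ‖y‖²` by the equality case of the triangle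
inequality. Adding `|[f x, f y]|` gives at most `‖y‖ max ‖s y ± x‖`; letting `s → ∞` and comparing
with the derivative of the norm at `y` yields `|[f x, f y]| ≤ |[x, y]|`. A right inverse of `f` is
again a phase isometry, which gives the reverse inequality.
-/

section DualityMap

open ComplexConjugate

variable {𝕜 : Type*} [RCLike 𝕜] {E : Type*} [NormedAddCommGroup E] [NormedSpace 𝕜 E]

variable (𝕜) in
/-- The normalized duality map of a normed space, the (set-valued) subdifferential of `‖·‖² / 2`.
Unlike `SuppFunc` it is meaningful at `0`, and its values scale with the point. -/
def dualityMap (v : E) : Set (StrongDual 𝕜 E) :=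
  {φ | ‖φ‖ ≤ ‖v‖ ∧ φ v = (‖v‖ : 𝕜) ^ 2}

theorem norm_apply_le_of_mem_dualityMap {v : E} {φ : StrongDual 𝕜 E} (hφ : φ ∈ dualityMap 𝕜 v)
    (u : E) : ‖φ u‖ ≤ ‖v‖ * ‖u‖ :=
  φ.le_of_opNorm_le hφ.1 u

theorem norm_smul_mem_dualityMap {v : E} {φ : StrongDual 𝕜 E} (hφ : ‖φ‖ ≤ 1)
    (hφv : φ v = ‖v‖) : (‖v‖ : 𝕜) • φ ∈ dualityMap 𝕜 v := by
  refine ⟨?_, by rw [smul_apply, hφv, smul_eq_mul, sq]⟩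
  rw [norm_smul, norm_ofReal, abs_norm]
  exact mul_le_of_le_one_right (norm_nonneg v) hφ

theorem conj_smul_mem_dualityMap {v : E} {φ : StrongDual 𝕜 E} (hφ : φ ∈ dualityMap 𝕜 v)
    (c : 𝕜) : conj c • φ ∈ dualityMap 𝕜 (c • v) := by
  constructor
  · rw [norm_smul, norm_smul, norm_conj]
    gcongr
    exact hφ.1
  · rw [smul_apply, map_smul, hφ.2, smul_eq_mul, smul_eq_mul, ← mul_assoc, RCLike.conj_mul,
      norm_smul, ofReal_mul, mul_pow]

theorem dualityMap_nonempty (v : E) : (dualityMap 𝕜 v).Nonempty :=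
  let ⟨_, hφ, hφv⟩ := exists_dual_vector'' 𝕜 v
  ⟨_, norm_smul_mem_dualityMap hφ hφv⟩

theorem exists_norm_le_one_norm_apply_eq [FiniteDimensional 𝕜 E] (φ : StrongDual 𝕜 E) :
    ∃ x, ‖x‖ ≤ 1 ∧ ‖φ x‖ = ‖φ‖ := by
  have : ProperSpace E := FiniteDimensional.proper_rclike 𝕜 E
  obtain ⟨x, hx, hmax⟩ := (isCompact_closedBall (0 : E) 1).exists_isMaxOn
    ⟨0, by simp⟩ φ.continuous.norm.continuousOn
  rw [mem_closedBall_zero_iff] at hx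
  refine ⟨x, hx, le_antisymm (φ.unit_le_opNorm x hx) ?_⟩
  exact φ.opNorm_le_of_unit_norm (norm_nonneg _) fun z hz =>
    hmax (mem_closedBall_zero_iff.mpr hz.le)

theorem exists_mem_dualityMap [FiniteDimensional 𝕜 E] (φ : StrongDual 𝕜 E) :
    ∃ v, φ ∈ dualityMap 𝕜 v := by
  obtain ⟨x, hx, hφx⟩ := exists_norm_le_one_norm_apply_eq φ
  have hφv : φ (conj (φ x) • x) = (‖φ‖ : 𝕜) ^ 2 := by
    rw [map_smul, smul_eq_mul, RCLike.conj_mul, hφx]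
  have hv : ‖conj (φ x) • x‖ = ‖φ‖ := by
    refine le_antisymm ?_ ?_
    · rw [norm_smul, norm_conj, hφx]
      exact mul_le_of_le_one_right (norm_nonneg φ) hx
    · rcases eq_or_ne φ 0 with rfl | hφ
      · simp
      refine le_of_mul_le_mul_left ?_ (norm_pos_iff.mpr hφ)
      calc ‖φ‖ * ‖φ‖ = ‖φ (conj (φ x) • x)‖ := by rw [hφv, norm_pow, norm_ofReal, abs_norm, sq]
        _ ≤ ‖φ‖ * ‖conj (φ x) • x‖ := φ.le_opNorm _
  exact ⟨conj (φ x) • x, hv.ge, by rw [hφv, hv]⟩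

theorem exists_mem_dualityMap_eqOn (F : Submodule 𝕜 E) [FiniteDimensional 𝕜 F]
    (g : F →ₗ[𝕜] 𝕜) : ∃ v : E, ∃ φ ∈ dualityMap 𝕜 v, ∀ u : F, φ u = g u := by
  obtain ⟨v, hv, hgv⟩ := exists_mem_dualityMap g.toContinuousLinearMap
  obtain ⟨φ, hφ, hnorm⟩ := exists_extension_norm_eq F g.toContinuousLinearMap
  exact ⟨v, φ, ⟨hnorm.trans_le hv, (hφ v).trans hgv⟩, hφ⟩

end DualityMap

namespace IsCompatSIP

open Filter Topology ComplexConjugate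

section RCLike

variable {𝕜 : Type*} [RCLike 𝕜] {E : Type*} [NormedAddCommGroup E] [NormedSpace 𝕜 E]
  {sip : E → E → 𝕜}

theorem eq_apply (h : IsCompatSIP 𝕜 sip) {v : E} {φ : StrongDual 𝕜 E} (hφ : φ ∈ dualityMap 𝕜 v)
    (u : E) : sip u v = φ u := by
  rcases eq_or_ne v 0 with rfl | hv
  · have hφ0 : φ = 0 := by simpa using hφ.1
    rw [h.1, hφ0, zero_apply]
  have hv' : (‖v‖ : 𝕜) ≠ 0 := ofReal_ne_zero.mpr (norm_ne_zero_iff.mpr hv)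
  have happly : (‖v‖ : 𝕜)⁻¹ * φ v = ‖v‖ := by rw [hφ.2, sq, inv_mul_cancel_left₀ hv']
  have hsupp : SuppFunc 𝕜 v ((‖v‖ : 𝕜)⁻¹ • φ) := by
    refine ⟨le_antisymm ?_ ?_, happly⟩
    · rw [norm_smul, norm_inv, norm_ofReal, abs_norm, inv_mul_le_one₀ (norm_pos_iff.mpr hv)]
      exact hφ.1
    · refine le_of_mul_le_mul_right ?_ (norm_pos_iff.mpr hv)
      calc 1 * ‖v‖ = ‖((‖v‖ : 𝕜)⁻¹ • φ) v‖ := by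
            rw [smul_apply, smul_eq_mul, happly, one_mul, norm_ofReal, abs_norm]
        _ ≤ ‖(‖v‖ : 𝕜)⁻¹ • φ‖ * ‖v‖ := ContinuousLinearMap.le_opNorm _ _
  rw [h.2 u v _ hsupp, smul_apply, smul_eq_mul, mul_inv_cancel_left₀ hv']

theorem self (h : IsCompatSIP 𝕜 sip) (v : E) : sip v v = (‖v‖ : 𝕜) ^ 2 :=
  let ⟨_, hφ⟩ := dualityMap_nonempty (𝕜 := 𝕜) v
  (h.eq_apply hφ v).trans hφ.2

theorem smul_left (h : IsCompatSIP 𝕜 sip) (u v : E) (c : 𝕜) : sip (c • u) v = c * sip u v := by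
  obtain ⟨φ, hφ⟩ := dualityMap_nonempty (𝕜 := 𝕜) v
  rw [h.eq_apply hφ, h.eq_apply hφ, map_smul, smul_eq_mul]

theorem smul_right (h : IsCompatSIP 𝕜 sip) (u v : E) (c : 𝕜) :
    sip u (c • v) = conj c * sip u v := by
  obtain ⟨φ, hφ⟩ := dualityMap_nonempty (𝕜 := 𝕜) v
  rw [h.eq_apply (conj_smul_mem_dualityMap hφ c), h.eq_apply hφ, smul_apply, smul_eq_mul]

theorem neg_left (h : IsCompatSIP 𝕜 sip) (u v : E) : sip (-u) v = -sip u v := by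
  simpa using h.smul_left u v (-1)

theorem neg_right (h : IsCompatSIP 𝕜 sip) (u v : E) : sip u (-v) = -sip u v := by
  simpa using h.smul_right u v (-1)

theorem continuous_right (h : IsCompatSIP 𝕜 sip) (u : E) : Continuous (sip u) := by
  -- A weak-* limit of functionals in `dualityMap v`, `v → x`, lies in `dualityMap x`, and `h`
  -- forces all functionals in `dualityMap x` to agree.
  choose J hJ using dualityMap_nonempty (𝕜 := 𝕜) (E := E)
  refine continuous_iff_ultrafilter.mpr fun x l hl => ?_
  have hnorm : Tendsto (fun v => ‖v‖) l (𝓝 ‖x‖) := continuous_norm.continuousAt.mono_left hl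
  obtain ⟨χ, -, hχ⟩ := (WeakDual.isCompact_closedBall (0 : StrongDual 𝕜 E)
    (‖x‖ + 1)).ultrafilter_le_nhds' (l.map fun v => StrongDual.toWeakDual (J v)) <| by
      rw [Ultrafilter.mem_map]
      filter_upwards [hnorm.eventually_le_const (lt_add_one ‖x‖)] with v hv
      simpa using (hJ v).1.trans hv
  have hlim : ∀ z, Tendsto (fun v => J v z) l (𝓝 (χ z)) := fun z =>
    ((WeakDual.eval_continuous z).tendsto χ).comp hχ
  have hχmem : WeakDual.toStrongDual χ ∈ dualityMap 𝕜 x := by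
    constructor
    · refine ContinuousLinearMap.opNorm_le_bound _ (norm_nonneg x) fun z => ?_
      exact le_of_tendsto_of_tendsto' (hlim z).norm (hnorm.mul_const ‖z‖) fun v =>
        norm_apply_le_of_mem_dualityMap (hJ v) z
    · have hdiff : Tendsto (fun v => J v (x - v)) l (𝓝 0) := by
        refine squeeze_zero_norm (fun v => norm_apply_le_of_mem_dualityMap (hJ v) (x - v)) ?_
        have : Tendsto (fun v : E => ‖v‖ * ‖x - v‖) (𝓝 x) (𝓝 (‖x‖ * ‖x - x‖)) :=
          Continuous.tendsto (by fun_prop) x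
        simpa using this.mono_left hl
      have hself : Tendsto (fun v => J v v) l (𝓝 ((‖x‖ : 𝕜) ^ 2)) := by
        simp only [(hJ _).2]
        exact ((continuous_ofReal.tendsto _).comp hnorm).pow 2
      refine tendsto_nhds_unique (hlim x) ?_
      simpa using hdiff.add hself
  rw [h.eq_apply hχmem]
  exact (hlim u).congr fun v => (h.eq_apply (hJ v) u).symm

end RCLike

section Real

variable {E : Type*} [NormedAddCommGroup E] [NormedSpace ℝ E] {sip : E → E → ℝ}

theorem two_mul_sub_le (h : IsCompatSIP ℝ sip) (v w : E) :
    2 * sip (w - v) v ≤ ‖w‖ ^ 2 - ‖v‖ ^ 2 := by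
  obtain ⟨φ, hφ⟩ := dualityMap_nonempty (𝕜 := ℝ) v
  have hw : φ w ≤ ‖v‖ * ‖w‖ := (le_abs_self _).trans (norm_apply_le_of_mem_dualityMap hφ w)
  have hv : φ v = ‖v‖ ^ 2 := hφ.2
  rw [h.eq_apply hφ, map_sub, hv]
  linarith [two_mul_le_add_sq ‖v‖ ‖w‖]

theorem eq_norm_mul_norm_of_norm_add_eq (h : IsCompatSIP ℝ sip) {u v : E}
    (huv : ‖u + v‖ = ‖u‖ + ‖v‖) : sip u v = ‖u‖ * ‖v‖ := by
  obtain ⟨φ, hφ, hφuv⟩ := exists_dual_vector'' ℝ (u + v)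
  have hle : ∀ z, φ z ≤ ‖z‖ := fun z =>
    (le_abs_self _).trans (by simpa using φ.le_of_opNorm_le hφ z)
  have hsum : φ u + φ v = ‖u‖ + ‖v‖ := by rw [← map_add, hφuv, ← huv]; rfl
  have hu : φ u = ‖u‖ := by linarith [hle u, hle v]
  have hv : φ v = ‖v‖ := by linarith [hle u, hle v]
  rw [h.eq_apply (norm_smul_mem_dualityMap hφ hv), smul_apply, hu, smul_eq_mul, mul_comm]
  rfl

theorem abs_add_abs_le (h : IsCompatSIP ℝ sip) (u v w : E) :
    |sip u w| + |sip v w| ≤ ‖w‖ * max ‖u + v‖ ‖u - v‖ := by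
  obtain ⟨φ, hφ⟩ := dualityMap_nonempty (𝕜 := ℝ) w
  have hle : ∀ z, |φ z| ≤ ‖w‖ * ‖z‖ := norm_apply_le_of_mem_dualityMap hφ
  rw [h.eq_apply hφ, h.eq_apply hφ, mul_max_of_nonneg _ _ (norm_nonneg w)]
  calc |φ u| + |φ v| = max |φ (u + v)| |φ (u - v)| := by
        rw [map_add, map_sub]
        grind
    _ ≤ max (‖w‖ * ‖u + v‖) (‖w‖ * ‖u - v‖) := max_le_max (hle _) (hle _)

theorem norm_add_smul_sq_le (h : IsCompatSIP ℝ sip) (u v : E) (t : ℝ) :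
    ‖v + t • u‖ ^ 2 ≤ ‖v‖ ^ 2 + 2 * (t * sip u (v + t • u)) := by
  have hsub := h.two_mul_sub_le (v + t • u) v
  rw [sub_add_cancel_left, h.neg_left, h.smul_left] at hsub
  linarith

theorem le_abs_of_forall_le_max (h : IsCompatSIP ℝ sip) {u v : E} {c : ℝ}
    (hc : ∀ t : ℝ, 0 < t → ‖v‖ ^ 2 + 2 * (t * c) ≤ max ‖v + t • u‖ ‖v - t • u‖ ^ 2) :
    c ≤ |sip u v| := by
  have hlim : Tendsto (fun t : ℝ => max |sip u (v + t • u)| |sip u (v + (-t) • u)|) (𝓝[>] 0)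
      (𝓝 |sip u v|) := by
    have hsip := h.continuous_right u
    have hcont : Continuous fun t : ℝ => max |sip u (v + t • u)| |sip u (v + (-t) • u)| := by
      fun_prop
    simpa using (hcont.tendsto 0).mono_left nhdsWithin_le_nhds
  refine ge_of_tendsto hlim ?_
  filter_upwards [self_mem_nhdsWithin] with t (ht : 0 < t)
  have hpos := h.norm_add_smul_sq_le u v t
  have hneg := h.norm_add_smul_sq_le u v (-t)
  have hct := hc t ht
  rw [sub_eq_add_neg, ← neg_smul] at hct
  rcases max_choice ‖v + t • u‖ ‖v + -t • u‖ with hmax | hmax <;> rw [hmax] at hct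
  · refine le_max_of_le_left ((le_of_mul_le_mul_left ?_ ht).trans (le_abs_self _))
    linarith
  · refine le_max_of_le_right ((le_of_mul_le_mul_left ?_ ht).trans (neg_le_abs _))
    linarith

end Real

end IsCompatSIP

/-- Two maps are phase equivalent if they agree up to a unimodular factor at every point. -/
def PhaseEquivalent {α F : Type*} [NormedAddCommGroup F] [NormedSpace ℝ F] (f g : α → F) : Prop :=
  ∃ σ : α → ℝ, (∀ x, ‖σ x‖ = 1) ∧ ∀ x, f x = σ x • g x

theorem phaseEquivalent_iff {α F : Type*} [NormedAddCommGroup F] [NormedSpace ℝ F] {f g : α → F} :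
    PhaseEquivalent f g ↔ ∀ x, f x = g x ∨ f x = -g x := by
  constructor
  · rintro ⟨σ, hσ, hf⟩ x
    rcases eq_or_eq_neg_of_abs_eq (hσ x) with h | h
    · exact .inl (by rw [hf, h, one_smul])
    · exact .inr (by rw [hf, h, neg_one_smul])
  · intro h
    have hσ : ∀ x, ∃ c : ℝ, ‖c‖ = 1 ∧ f x = c • g x := fun x =>
      (h x).elim (fun hx => ⟨1, by simp, by simpa using hx⟩)
        fun hx => ⟨-1, by simp, by simpa using hx⟩
    choose σ hσ hf using hσ
    exact ⟨σ, hσ, hf⟩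

/-- A phase isometry preserves the unordered pair `‖x + y‖`, `‖x - y‖` for all `x` and `y`. -/
def IsPhaseIsometry {E F : Type*} [NormedAddCommGroup E] [NormedAddCommGroup F] (f : E → F) :
    Prop :=
  ∀ x y : E, ({‖f x + f y‖, ‖f x - f y‖} : Set ℝ) = {‖x + y‖, ‖x - y‖}

namespace IsPhaseIsometry

section NormedAddCommGroup

variable {E F : Type*} [NormedAddCommGroup E] [NormedAddCommGroup F] {f : E → F}

theorem max_norm_add_norm_sub (hf : IsPhaseIsometry f) (x y : E) :
    max ‖f x + f y‖ ‖f x - f y‖ = max ‖x + y‖ ‖x - y‖ := by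
  rw [← csSup_pair, hf x y, csSup_pair]

theorem norm_add_eq_or_norm_sub_eq (hf : IsPhaseIsometry f) (x y : E) :
    ‖f x + f y‖ = ‖x + y‖ ∨ ‖f x - f y‖ = ‖x + y‖ := by
  have h : ‖x + y‖ ∈ ({‖f x + f y‖, ‖f x - f y‖} : Set ℝ) := hf x y ▸ Set.mem_insert _ _
  exact h.imp Eq.symm Eq.symm

theorem eq_or_eq_neg_of_map_eq (hf : IsPhaseIsometry f) {x y : E} (h : f x = f y) :
    x = y ∨ x = -y := by
  have h0 : (0 : ℝ) ∈ ({‖x + y‖, ‖x - y‖} : Set ℝ) := by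
    rw [← hf x y, h, sub_self, norm_zero]
    exact Set.mem_insert_of_mem _ rfl
  rcases h0 with h0 | h0
  · exact .inr (eq_neg_of_add_eq_zero_left (norm_eq_zero.mp h0.symm))
  · exact .inl (sub_eq_zero.mp (norm_eq_zero.mp h0.symm))

theorem of_rightInverse (hf : IsPhaseIsometry f) {g : F → E} (hg : Function.RightInverse g f) :
    IsPhaseIsometry g := fun u v => by
  rw [← hf, hg, hg]

end NormedAddCommGroup

variable {E F : Type*} [NormedAddCommGroup E] [NormedSpace ℝ E] [NormedAddCommGroup F]
  [NormedSpace ℝ F] {f : E → F} {sipE : E → E → ℝ} {sipF : F → F → ℝ}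

theorem norm_map (hf : IsPhaseIsometry f) (x : E) : ‖f x‖ = ‖x‖ := by
  have h := hf.max_norm_add_norm_sub x x
  rw [sub_self, sub_self, norm_zero, norm_zero, max_eq_left (norm_nonneg _),
    max_eq_left (norm_nonneg _), ← two_smul ℝ, ← two_smul ℝ x, norm_smul, norm_smul] at h
  exact mul_left_cancel₀ (by norm_num) h

theorem abs_sip_map_smul_map (hf : IsPhaseIsometry f) (hF : IsCompatSIP ℝ sipF) {s : ℝ}
    (hs : 0 ≤ s) (y : E) : |sipF (f (s • y)) (f y)| = s * ‖y‖ ^ 2 := by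
  have hnorm : ‖s • y + y‖ = ‖f (s • y)‖ + ‖f y‖ := by
    rw [hf.norm_map, hf.norm_map]
    exact (SameRay.sameRay_nonneg_smul_left y hs).norm_add
  have hval : ‖f (s • y)‖ * ‖f y‖ = s * ‖y‖ ^ 2 := by
    rw [hf.norm_map, hf.norm_map, norm_smul, Real.norm_of_nonneg hs, mul_assoc, sq]
  rw [← hval, ← abs_of_nonneg (mul_nonneg (norm_nonneg (f (s • y))) (norm_nonneg (f y)))]
  rcases hf.norm_add_eq_or_norm_sub_eq (s • y) y with h | h
  · rw [hF.eq_norm_mul_norm_of_norm_add_eq (h.trans hnorm)]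
  · rw [sub_eq_add_neg, hnorm, ← norm_neg (f y)] at h
    rw [← norm_neg (f y), ← hF.eq_norm_mul_norm_of_norm_add_eq h, hF.neg_right, abs_neg]

theorem abs_sip_map_le (hf : IsPhaseIsometry f) (hE : IsCompatSIP ℝ sipE)
    (hF : IsCompatSIP ℝ sipF) (x y : E) : |sipF (f x) (f y)| ≤ |sipE x y| := by
  refine hE.le_abs_of_forall_le_max fun t ht => ?_
  have hsum := hF.abs_add_abs_le (f (t⁻¹ • y)) (f x) (f y)
  rw [hf.abs_sip_map_smul_map hF (inv_nonneg.mpr ht.le), hf.norm_map,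
    hf.max_norm_add_norm_sub] at hsum
  set M := max ‖y + t • x‖ ‖y - t • x‖
  have hscale : t * max ‖t⁻¹ • y + x‖ ‖t⁻¹ • y - x‖ = M := by
    rw [mul_max_of_nonneg _ _ ht.le, ← norm_smul_of_nonneg ht.le, ← norm_smul_of_nonneg ht.le,
      smul_add, smul_sub, smul_inv_smul₀ ht.ne']
  have hmul : ‖y‖ ^ 2 + t * |sipF (f x) (f y)| ≤ ‖y‖ * M := by
    calc ‖y‖ ^ 2 + t * |sipF (f x) (f y)|
        = t * (t⁻¹ * ‖y‖ ^ 2 + |sipF (f x) (f y)|) := by field_simp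
      _ ≤ t * (‖y‖ * max ‖t⁻¹ • y + x‖ ‖t⁻¹ • y - x‖) := by gcongr
      _ = ‖y‖ * M := by rw [mul_left_comm, hscale]
  linarith [two_mul_le_add_sq ‖y‖ M]

theorem abs_sip_map (hf : IsPhaseIsometry f) (hsurj : Function.Surjective f)
    (hE : IsCompatSIP ℝ sipE) (hF : IsCompatSIP ℝ sipF) (x y : E) :
    |sipF (f x) (f y)| = |sipE x y| := by
  refine (hf.abs_sip_map_le hE hF x y).antisymm ?_
  obtain ⟨g, hg⟩ := hsurj.hasRightInverse
  have hgf (z : E) : g (f z) = z ∨ g (f z) = -z := hf.eq_or_eq_neg_of_map_eq (hg (f z))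
  have hsip : |sipE (g (f x)) (g (f y))| = |sipE x y| := by
    rcases hgf x with hx | hx <;> rcases hgf y with hy | hy <;>
      simp only [hx, hy, hE.neg_left, hE.neg_right, abs_neg]
  exact hsip ▸ (hf.of_rightInverse hg).abs_sip_map_le hF hE (f x) (f y)

end IsPhaseIsometry

namespace PhaseEquivalent

variable {E F : Type*} [NormedAddCommGroup E] [NormedSpace ℝ E] [NormedAddCommGroup F]
  [NormedSpace ℝ F] {f : E → F}

theorem surjective {U : E →ₗ[ℝ] F} (h : PhaseEquivalent f U) (hsurj : Function.Surjective f) :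
    Function.Surjective U := fun w => by
  obtain ⟨x, rfl⟩ := hsurj w
  rcases phaseEquivalent_iff.mp h x with hx | hx
  · exact ⟨x, hx.symm⟩
  · exact ⟨-x, by rw [map_neg, hx]⟩

theorem isPhaseIsometry {U : E →ₗᵢ[ℝ] F} (h : PhaseEquivalent f U) : IsPhaseIsometry f := by
  intro x y
  rw [← U.norm_map (x + y), ← U.norm_map (x - y), map_add, map_sub]
  rcases phaseEquivalent_iff.mp h x with hx | hx <;>
    rcases phaseEquivalent_iff.mp h y with hy | hy <;> rw [hx, hy]
  · rw [← sub_eq_add_neg, sub_neg_eq_add, Set.pair_comm]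
  · rw [neg_add_eq_sub, ← neg_add', norm_neg, norm_sub_rev, Set.pair_comm]
  · rw [← neg_add, norm_neg, neg_sub_neg, norm_sub_rev]

end PhaseEquivalent

section Signs

theorem exists_units_smul_eq_of_abs_eq {α : Type*} [AddCommGroup α] [LinearOrder α]
    [IsOrderedAddMonoid α] {a b : α} (h : |a| = |b|) : ∃ u : ℤˣ, a = u • b := by
  rcases abs_eq_abs.mp h with rfl | rfl
  · exact ⟨1, (one_smul _ _).symm⟩
  · exact ⟨-1, by rw [Units.neg_smul, one_smul]⟩

theorem exists_units_smul_add_sub_of_abs_eq {α : Type*} [AddCommGroup α] [LinearOrder α]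
    [IsOrderedAddMonoid α] {a b c d p q : α} (ha : |a| = |p|) (hb : |b| = |q|)
    (hc : |c| = |p + q|) (hd : |d| = |p - q|) :
    ∃ ε δ δ' : ℤˣ, c = δ • (a + ε • b) ∧ d = δ' • (a - ε • b) := by
  obtain ⟨u, rfl⟩ := exists_units_smul_eq_of_abs_eq ha
  obtain ⟨v, rfl⟩ := exists_units_smul_eq_of_abs_eq hb
  obtain ⟨w, rfl⟩ := exists_units_smul_eq_of_abs_eq hc
  obtain ⟨w', rfl⟩ := exists_units_smul_eq_of_abs_eq hd
  have hq : (u * v) • v • q = u • q := by rw [smul_smul, mul_assoc, Int.units_mul_self, mul_one]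
  refine ⟨u * v, w * u, w' * u, ?_, ?_⟩
  · rw [hq, ← smul_add, smul_smul, mul_assoc, Int.units_mul_self, mul_one]
  · rw [hq, ← smul_sub, smul_smul, mul_assoc, Int.units_mul_self, mul_one]

end Signs

/-- A map is additive up to signs if `f (x + y) = ± (f x + ε f y)` and `f (x - y) = ± (f x - ε f y)`
with a common sign `ε`. -/
def IsSignAdditive {A B : Type*} [AddCommGroup A] [AddCommGroup B] (f : A → B) : Prop :=
  ∀ x y, ∃ ε δ δ' : ℤˣ, f (x + y) = δ • (f x + ε • f y) ∧ f (x - y) = δ' • (f x - ε • f y)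

section Module

variable {K V : Type*} [Field K] [AddCommGroup V] [Module K V]

theorem exists_forall_eq_zero_of_forall_dual [Infinite K] {ι : Type*} [Finite ι] {s : ι → Set V}
    (h : ∀ g : Module.Dual K V, ∃ i, ∀ v ∈ s i, g v = 0) : ∃ i, ∀ v ∈ s i, v = 0 := by
  let p (i : ι) : Submodule K V := Submodule.span K (s i)
  have hcover : ⋃ i, ((p i).dualAnnihilator : Set (Module.Dual K V)) = Set.univ := by
    refine Set.eq_univ_of_forall fun g => Set.mem_iUnion.mpr ((h g).imp fun i hi => ?_)
    have hle : p i ≤ LinearMap.ker g := Submodule.span_le.mpr hi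
    exact (Submodule.mem_dualAnnihilator g).mpr hle
  obtain ⟨i, hi⟩ := Subspace.exists_eq_top_of_iUnion_eq_univ hcover
  exact ⟨i, Submodule.span_eq_bot.mp (Submodule.dualAnnihilator_eq_top_iff.mp hi)⟩

theorem isSignAdditive_of_forall_dual [Infinite K] {A : Type*} [AddCommGroup A] {f : A → V}
    (h : ∀ x y, ∀ g : Module.Dual K V, ∃ ε δ δ' : ℤˣ,
      g (f (x + y)) = δ • (g (f x) + ε • g (f y)) ∧
        g (f (x - y)) = δ' • (g (f x) - ε • g (f y))) :
    IsSignAdditive f := fun x y => by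
  let s (u : ℤˣ × ℤˣ × ℤˣ) : Set V :=
    {f (x + y) - u.2.1 • (f x + u.1 • f y), f (x - y) - u.2.2 • (f x - u.1 • f y)}
  have hs : ∀ g : Module.Dual K V, ∃ u, ∀ v ∈ s u, g v = 0 := fun g => by
    obtain ⟨ε, δ, δ', hadd, hsub⟩ := h x y g
    refine ⟨(ε, δ, δ'), ?_⟩
    simp [s, hadd, hsub, Units.smul_def]
  obtain ⟨⟨ε, δ, δ'⟩, hu⟩ := exists_forall_eq_zero_of_forall_dual hs
  simp only [s, Set.mem_insert_iff, Set.mem_singleton_iff, forall_eq_or_imp, forall_eq,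
    sub_eq_zero] at hu
  exact ⟨ε, δ, δ', hu⟩

variable (K) in
theorem polar_add_right_of_parallelogram [NeZero (2 : K)] {A : Type*} [AddCommGroup A]
    {Q : A → V} (hQ : ∀ x y, Q (x + y) + Q (x - y) = (2 : K) • (Q x + Q y)) (x y z : A) :
    QuadraticMap.polar Q x (y + z) = QuadraticMap.polar Q x y + QuadraticMap.polar Q x z := by
  have hpolar (a b : A) : (2 : K) • QuadraticMap.polar Q a b = Q (a + b) - Q (a - b) := by
    rw [QuadraticMap.polar]
    linear_combination (norm := module) hQ a b
  have hinj : Function.Injective fun v : V => (2 : K) • (2 : K) • v :=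
    (smul_right_injective V two_ne_zero).comp (smul_right_injective V two_ne_zero)
  refine hinj ?_
  have h1 := hQ (x + y) z
  have h2 := hQ (x - y) z
  have h3 := hQ (x + z) y
  have h4 := hQ (x - z) y
  rw [show x + y + z = x + (y + z) by abel, show x + y - z = x + (y - z) by abel] at h1
  rw [show x - y + z = x - (y - z) by abel, show x - y - z = x - (y + z) by abel] at h2
  rw [show x + z + y = x + (y + z) by abel, show x + z - y = x - (y - z) by abel] at h3
  rw [show x - z + y = x + (y - z) by abel, show x - z - y = x - (y + z) by abel] at h4
  simp only [hpolar, smul_add]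
  linear_combination (norm := module) h1 - h2 + h3 - h4

theorem dual_units_smul_smul (g : Module.Dual K V) (u : ℤˣ) (v : V) :
    g (u • v) • u • v = g v • v := by
  rcases Int.units_eq_one_or u with rfl | rfl <;> simp

theorem IsSignAdditive.polar_dual_smul_eq {A : Type*} [AddCommGroup A] {f : A → V}
    (hf : IsSignAdditive f) {g : Module.Dual K V} {x₀ : A} (hg : g (f x₀) = 1) (y : A) :
    ∃ ε : ℤˣ, QuadraticMap.polar (fun x => g (f x) • f x) x₀ y = ε • (f y + g (f y) • f x₀) := by
  obtain ⟨ε, δ, -, hadd, -⟩ := hf x₀ y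
  refine ⟨ε, ?_⟩
  rw [QuadraticMap.polar, hadd, dual_units_smul_smul, map_add, smul_add, add_smul, add_smul,
    dual_units_smul_smul, hg]
  rcases Int.units_eq_one_or ε with rfl | rfl
  · simp only [one_smul]
    module
  · simp only [Units.neg_smul, one_smul, map_neg]
    module

theorem IsSignAdditive.parallelogram_dual_smul {A : Type*} [AddCommGroup A] {f : A → V}
    (hf : IsSignAdditive f) (g : Module.Dual K V) (x y : A) :
    g (f (x + y)) • f (x + y) + g (f (x - y)) • f (x - y) =
      (2 : K) • (g (f x) • f x + g (f y) • f y) := by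
  obtain ⟨ε, δ, δ', hadd, hsub⟩ := hf x y
  rw [hadd, hsub, dual_units_smul_smul, dual_units_smul_smul, ← dual_units_smul_smul g ε (f y),
    map_add, map_sub]
  generalize ε • f y = w
  module

theorem IsSignAdditive.exists_addMonoidHom [NeZero (2 : K)] {A : Type*} [AddCommGroup A]
    {f : A → V} (hf : IsSignAdditive f) : ∃ U : A →+ V, ∀ x, f x = U x ∨ f x = -U x := by
  rcases eq_or_ne f 0 with rfl | hne
  · exact ⟨0, fun x => .inl rfl⟩
  obtain ⟨x₀, hx₀⟩ := Function.ne_iff.mp hne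
  obtain ⟨g, hg⟩ := Module.Projective.exists_dual_eq_one K hx₀
  let B : A →+ V := AddMonoidHom.mk'
    (QuadraticMap.polar (fun x => g (f x) • f x) x₀)
    (polar_add_right_of_parallelogram K (hf.parallelogram_dual_smul g) x₀)
  have hB (y : A) : ∃ ε : ℤˣ, B y = ε • (f y + g (f y) • f x₀) := hf.polar_dual_smul_eq hg y
  refine ⟨((LinearMap.id - (2⁻¹ : K) • g.smulRight (f x₀) : V →ₗ[K] V) : V →+ V).comp B,
    fun y => ?_⟩
  obtain ⟨ε, hε⟩ := hB y
  have hU : B y - (2⁻¹ : K) • g (B y) • f x₀ = ε • f y := by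
    have hgB : g (B y) = ε • (2 * g (f y)) := by
      rw [hε, Units.smul_def, Units.smul_def, map_zsmul, map_add, map_smul, hg, smul_eq_mul,
        mul_one, two_mul]
    rw [hgB, hε, smul_assoc, ← smul_comm ε, ← smul_sub, smul_smul,
      inv_mul_cancel_left₀ two_ne_zero, add_sub_cancel_right]
  rcases Int.units_eq_one_or ε with rfl | rfl
  · exact .inl (by simpa using hU.symm)
  · exact .inr (by simpa [neg_eq_iff_eq_neg] using hU.symm)

end Module

section NormSIP

variable {𝕜 : Type*} [RCLike 𝕜] {E F : Type*} [NormedAddCommGroup E] [NormedSpace 𝕜 E]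
  [NormedAddCommGroup F] [NormedSpace 𝕜 F] {sipE : E → E → 𝕜} {sipF : F → F → 𝕜} {f : E → F}

theorem exists_dual_norm_apply_eq_of_norm_sip_eq (hE : IsCompatSIP 𝕜 sipE)
    (hF : IsCompatSIP 𝕜 sipF) (hsurj : Function.Surjective f)
    (hf : ∀ x y, ‖sipF (f x) (f y)‖ = ‖sipE x y‖) (g : Module.Dual 𝕜 F) {s : Set E}
    (hs : s.Finite) : ∃ L : Module.Dual 𝕜 E, ∀ z ∈ s, ‖g (f z)‖ = ‖L z‖ := by
  let W := Submodule.span 𝕜 (f '' s)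
  have : FiniteDimensional 𝕜 W := FiniteDimensional.span_of_finite 𝕜 (hs.image f)
  obtain ⟨v, φ, hφ, hφg⟩ := exists_mem_dualityMap_eqOn W (g.domRestrict W)
  obtain ⟨w, rfl⟩ := hsurj v
  obtain ⟨ψ, hψ⟩ := dualityMap_nonempty (𝕜 := 𝕜) w
  refine ⟨ψ, fun z hz => ?_⟩
  calc ‖g (f z)‖ = ‖φ (f z)‖ := by
        have hmem : f z ∈ W := Submodule.subset_span (Set.mem_image_of_mem f hz)
        rw [hφg ⟨f z, hmem⟩, LinearMap.domRestrict_apply]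
    _ = ‖sipE z w‖ := by rw [← hF.eq_apply hφ, hf]
    _ = ‖ψ z‖ := by rw [hE.eq_apply hψ]

theorem norm_map_of_norm_sip_eq (hE : IsCompatSIP 𝕜 sipE) (hF : IsCompatSIP 𝕜 sipF)
    (hf : ∀ x y, ‖sipF (f x) (f y)‖ = ‖sipE x y‖) (x : E) : ‖f x‖ = ‖x‖ := by
  have h := hf x x
  rw [hF.self, hE.self, norm_pow, norm_pow, norm_ofReal, norm_ofReal, abs_norm, abs_norm] at h
  exact (pow_left_inj₀ (norm_nonneg _) (norm_nonneg _) two_ne_zero).mp h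

end NormSIP

section Real

variable {E F : Type*} [NormedAddCommGroup E] [NormedSpace ℝ E] [NormedAddCommGroup F]
  [NormedSpace ℝ F] {sipE : E → E → ℝ} {sipF : F → F → ℝ} {f : E → F}

theorem isSignAdditive_of_norm_sip_eq (hE : IsCompatSIP ℝ sipE) (hF : IsCompatSIP ℝ sipF)
    (hsurj : Function.Surjective f) (hf : ∀ x y, ‖sipF (f x) (f y)‖ = ‖sipE x y‖) :
    IsSignAdditive f := by
  refine isSignAdditive_of_forall_dual (K := ℝ) fun x y g => ?_
  obtain ⟨L, hL⟩ := exists_dual_norm_apply_eq_of_norm_sip_eq hE hF hsurj hf g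
    (Set.toFinite {x, y, x + y, x - y})
  refine exists_units_smul_add_sub_of_abs_eq (p := L x) (q := L y) (hL _ (by simp))
    (hL _ (by simp)) ?_ ?_
  · rw [← map_add]
    exact hL _ (by simp)
  · rw [← map_sub]
    exact hL _ (by simp)

theorem IsSignAdditive.exists_linearIsometry (hf : IsSignAdditive f)
    (hnorm : ∀ x, ‖f x‖ = ‖x‖) : ∃ U : E →ₗᵢ[ℝ] F, PhaseEquivalent f U := by
  obtain ⟨U, hU⟩ := hf.exists_addMonoidHom (K := ℝ)
  have hUnorm (x : E) : ‖U x‖ = ‖x‖ := by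
    rcases hU x with h | h
    · rw [← h, hnorm]
    · rw [← norm_neg, ← h, hnorm]
  have hcont : Continuous U := (AddMonoidHomClass.isometry_of_norm U hUnorm).continuous
  exact ⟨⟨U.toRealLinearMap hcont, hUnorm⟩, phaseEquivalent_iff.mpr hU⟩

end Real

theorem stmt15_general {X Y : Type*} [NormedAddCommGroup X] [NormedSpace ℝ X]
    [NormedAddCommGroup Y] [NormedSpace ℝ Y] {sipX : X → X → ℝ} (hX : IsCompatSIP ℝ sipX)
    {sipY : Y → Y → ℝ} (hY : IsCompatSIP ℝ sipY) {f : X → Y} (hsurj : Function.Surjective f) :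
    List.TFAE [
      ∀ x y, ‖sipY (f x) (f y)‖ = ‖sipX x y‖,
      ∃ U : X →ₗ[ℝ] Y, Function.Surjective U ∧ (∀ x, ‖U x‖ = ‖x‖) ∧ PhaseEquivalent f U,
      IsPhaseIsometry f] := by
  tfae_have 1 → 2 := fun h => by
    obtain ⟨U, hU⟩ := (isSignAdditive_of_norm_sip_eq hX hY hsurj h).exists_linearIsometry
      (norm_map_of_norm_sip_eq hX hY h)
    exact ⟨U, hU.surjective hsurj, U.norm_map, hU⟩
  tfae_have 2 → 3 := fun ⟨U, _, hU, h⟩ => PhaseEquivalent.isPhaseIsometry (U := ⟨U, hU⟩) h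
  tfae_have 3 → 1 := fun h => h.abs_sip_map hsurj hX hY
  tfae_finish

theorem stmt15 {X Y : Type*} [NormedAddCommGroup X] [NormedSpace ℝ X]
    [NormedAddCommGroup Y] [NormedSpace ℝ Y] [StrictConvexSpace ℝ Y]
    (hsmX : NormSmooth ℝ X) (hsmY : NormSmooth ℝ Y)
    (sipX : X → X → ℝ) (hX : IsCompatSIP ℝ sipX)
    (sipY : Y → Y → ℝ) (hY : IsCompatSIP ℝ sipY)
    (f : X → Y) (hsurj : Function.Surjective f) :
    ((∀ x y : X, ‖sipY (f x) (f y)‖ = ‖sipX x y‖) ↔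
      (∃ U : X →ₗ[ℝ] Y, Function.Surjective U ∧ (∀ x : X, ‖U x‖ = ‖x‖) ∧
        ∃ σ : X → ℝ, (∀ x : X, ‖σ x‖ = 1) ∧ ∀ x : X, f x = σ x • U x)) ∧
    ((∀ x y : X, ‖sipY (f x) (f y)‖ = ‖sipX x y‖) ↔
      (∀ x y : X, ({‖f x + f y‖, ‖f x - f y‖} : Set ℝ) = {‖x + y‖, ‖x - y‖})) := by
  have h := stmt15_general hX hY hsurj
  exact ⟨h.out 0 1, h.out 0 2⟩
end
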